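/- For every 0 < ε < 1 there exists C > 0 such that, for p ≥ C log n / n, the binomial random graph G = G_{n,p} asymptotically almost surely satisfies the following: for every H ∈ H^ε_{n,p}(G), the graph G' := G ∖ H satisfies property RE(1/2 + ε/4). -/

import Mathlib

/-!
Write `K = G \ H`. Rotate a longest path `P` of `K ∪ P` with its last vertex fixed for as long as
this yields new first vertices. Let `R` be the set of first vertices obtained and `q x` the path
found for `x ∈ R`. Every `K`-neighbour of `x ∈ R` is then the successor on `q x` of a vertex of
`R`, and, by Pósa's observation, it belongs to `R` or is next to a vertex of `R` on `P`. By the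
second property all edges of `K` at `R` lie inside a set of at most `3|R|` vertices. Since `K` has
minimum degree of order `εnp` and small sets are sparse in `G`, this forces `|R|` to be linear in
`n`.

The first property confines the neighbours of `x` to a set of only `|R|` vertices, which is
determined by `x`, `R` and `q`. Each rotation is determined by its two first vertices, so at most
`exp (O(n log n))` systems of paths `q` can occur. Chernoff's bound for a set of order `n²` pairs
therefore survives a union bound over all systems, and `K` has at most `|X||R|p + o(n²p)` edges
from `X` to these sets, for every `X ⊆ R`. All but the first `k` vertices of the Pósa ordering have
`K`-degree at least about `(min (k, n/2) + εn) p`; taking `k` slightly smaller than `|R|` and `X`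
to be the rest of `R` gives `|R| ≥ (1/2 + ε/4) n`.

A connected component of `K` satisfies the same two properties with empty paths `q x`, so each
component has more than `n/2` vertices and `K` is connected. Rotating every `q x` once more at its
other end gives the sets `T_x`.
-/

open Filter Real

namespace Resilience

variable {V : Type*}

/-- The degree of a vertex, as the cardinality of its neighbourhood. -/
noncomputable def deg (G : SimpleGraph V) (v : V) : ℕ := (G.neighborSet v).ncard

/-- The neighbourhood of a set of vertices: all vertices with a neighbour in `X`. -/
def nbhd (G : SimpleGraph V) (X : Set V) : Set V := {v | ∃ x ∈ X, G.Adj v x}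

/-- The minimum degree over a set of vertices. -/
noncomputable def minDeg (G : SimpleGraph V) (X : Set V) : ℕ :=
  sInf ((fun v => deg G v) '' X)

/-- The number of edges of `G` with one endpoint in `X` and the other in `Y`. -/
noncomputable def eBetween (G : SimpleGraph V) (X Y : Set V) : ℕ :=
  {e ∈ G.edgeSet | ∃ x ∈ X, ∃ y ∈ Y, e = s(x, y)}.ncard

/-- The number of edges of `G` with both endpoints in `A`. -/
noncomputable def eIn (G : SimpleGraph V) (A : Set V) : ℕ :=
  {e ∈ G.edgeSet | ∀ v ∈ e, v ∈ A}.ncard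

/-- The graph on `V` whose edges are the consecutive pairs of the list `l`;
this lets us view a path, recorded as a list of distinct vertices, as a graph. -/
def listGraph (l : List V) : SimpleGraph V :=
  SimpleGraph.fromEdgeSet {e | ∃ q ∈ l.zip l.tail, e = s(q.1, q.2)}

/-- `l` is a (nonempty) path on `V` all of whose edges lie in `G`. -/
def IsPathOn (G : SimpleGraph V) (l : List V) : Prop :=
  l ≠ [] ∧ l.Nodup ∧ l.Chain' G.Adj

/-- `l` is a longest path with all edges in `G`. -/
def IsLongestPathOn (G : SimpleGraph V) (l : List V) : Prop :=
  IsPathOn G l ∧ ∀ l' : List V, IsPathOn G l' → l'.length ≤ l.length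

/-- `l'` is obtained from the path `l` (with fixed last endpoint) by a single rotation
within `G`, whose broken edge lies on the original path `P`.  Writing
`l = a :: t₁ ++ c :: b :: t₂`, the pivot is `b`, the new edge is `ab ∈ G`, the broken
edge is `cb` (an edge of `P`), and the rotated path is `(a :: t₁ ++ [c]).reverse ++ b :: t₂`. -/
def IsRotation (G : SimpleGraph V) (P l l' : List V) : Prop :=
  ∃ (a c b : V) (t₁ t₂ : List V),
    l = a :: t₁ ++ c :: b :: t₂ ∧ G.Adj a b ∧ (listGraph P).Adj c b ∧
    l' = (a :: t₁ ++ [c]).reverse ++ b :: t₂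

/-- The set of paths obtainable from `P` by at most `t` successive rotations within `G`
with fixed last endpoint, all broken edges lying on `P`. -/
def rotSet (G : SimpleGraph V) (P : List V) : ℕ → Set (List V)
  | 0 => {P}
  | t + 1 => rotSet G P t ∪ {l' | ∃ l ∈ rotSet G P t, IsRotation G P l l'}

/-- `R^t_{G,P,u}`: the set of endpoints of paths obtainable from `P` by at most `t`
successive rotations within `G` with fixed last endpoint. -/
def Rset (G : SimpleGraph V) (P : List V) (t : ℕ) : Set V :=
  {x | ∃ l ∈ rotSet G P t, l.head? = some x}

/-- The family `H^ε_{n,p}` of Pósa-type subgraphs: there is an ordering of the vertices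
with non-increasing degrees such that `d_H(v_i) ≤ (n-i)p - εnp` for all `i < n/2`
(1-based indexing). -/
def PosaFamily (n : ℕ) (p ε : ℝ) (H : SimpleGraph (Fin n)) : Prop :=
  ∃ v : Fin n → Fin n, Function.Bijective v ∧
    (∀ i j : Fin n, i ≤ j → deg H (v j) ≤ deg H (v i)) ∧
    ∀ i : Fin n, ((i.1 : ℝ) + 1) < n / 2 →
      (deg H (v i) : ℝ) ≤ ((n : ℝ) - ((i.1 : ℝ) + 1)) * p - ε * n * p

/-- The family `H^{ε,δ}_{n,p}` of (shifted) Chvátal-type subgraphs, where the shift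
`δn` is recorded as a natural number `s`: there is an ordering of the vertices with
non-increasing degrees such that for all `i < n/2` (1-based indexing), either
`d_H(v_i) ≤ (n-i)p - εnp` or `d_H(v_{n-i-s}) ≤ ip - εnp`. -/
def ChvatalFamily (n : ℕ) (p ε : ℝ) (s : ℕ) (H : SimpleGraph (Fin n)) : Prop :=
  ∃ v : Fin n → Fin n, Function.Bijective v ∧
    (∀ i j : Fin n, i ≤ j → deg H (v j) ≤ deg H (v i)) ∧
    ∀ i : Fin n, ((i.1 : ℝ) + 1) < n / 2 →
      ((deg H (v i) : ℝ) ≤ ((n : ℝ) - ((i.1 : ℝ) + 1)) * p - ε * n * p ∨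
       (deg H (v ⟨n - (i.1 + 1) - s - 1, by have := i.2; omega⟩) : ℝ) ≤
         ((i.1 : ℝ) + 1) * p - ε * n * p)

/-- The probability weight of a fixed graph `G` in the binomial random graph `G_{n,p}`. -/
noncomputable def weight (n : ℕ) (p : ℝ) (G : SimpleGraph (Fin n)) : ℝ :=
  p ^ G.edgeSet.ncard * (1 - p) ^ (n.choose 2 - G.edgeSet.ncard)

open Classical in
/-- The probability that the binomial random graph `G_{n,p}` satisfies the property `Q`. -/
noncomputable def Pr (n : ℕ) (p : ℝ) (Q : SimpleGraph (Fin n) → Prop) : ℝ :=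
  ∑ G : SimpleGraph (Fin n), if Q G then weight n p G else 0

/-- Property `RE(δ)` for a (connected) graph `G` on `n` vertices: for every path `P`
on the vertex set, either `G ∪ P` has a longer path, or there are at least `δn` vertices
`v`, each with a set `T v` of at least `δn` vertices `w`, such that `G ∪ P` has a path
from `v` to `w` with the same vertex set as `P`. -/
def RE (n : ℕ) (δ : ℝ) (G : SimpleGraph (Fin n)) : Prop :=
  G.Connected ∧
  ∀ P : List (Fin n), P ≠ [] → P.Nodup →
    (∃ Q : List (Fin n), IsPathOn (G ⊔ listGraph P) Q ∧ P.length < Q.length) ∨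
    (∃ S : Set (Fin n), δ * n ≤ S.ncard ∧
      ∃ T : Fin n → Set (Fin n), (∀ v ∈ S, δ * n ≤ (T v).ncard) ∧
        ∀ v ∈ S, ∀ w ∈ T v, ∃ Q : List (Fin n),
          IsPathOn (G ⊔ listGraph P) Q ∧ Q.head? = some v ∧ Q.getLast? = some w ∧
          Q.toFinset = P.toFinset)

/-- `G₂` complements `G₁` (with respect to parameter `δ` as in `RE(δ)`): for every path
`P` on the vertex set, either `G₁ ∪ P` has a longer path, or there are sets `S`, `T v`
as in the definition of `RE(δ)` together with `v ∈ S` and `w ∈ T v` such that `vw` is an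
edge of `G₁ ∪ G₂`. -/
def Complements (n : ℕ) (δ : ℝ) (G₁ G₂ : SimpleGraph (Fin n)) : Prop :=
  ∀ P : List (Fin n), P ≠ [] → P.Nodup →
    (∃ Q : List (Fin n), IsPathOn (G₁ ⊔ listGraph P) Q ∧ P.length < Q.length) ∨
    (∃ S : Set (Fin n), δ * n ≤ S.ncard ∧
      ∃ T : Fin n → Set (Fin n), (∀ v ∈ S, δ * n ≤ (T v).ncard) ∧
        (∀ v ∈ S, ∀ w ∈ T v, ∃ Q : List (Fin n),
          IsPathOn (G₁ ⊔ listGraph P) Q ∧ Q.head? = some v ∧ Q.getLast? = some w ∧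
          Q.toFinset = P.toFinset) ∧
        ∃ v ∈ S, ∃ w ∈ T v, (G₁ ⊔ G₂).Adj v w)

/-! ### Pósa rotations -/

section Lists

lemma mem_zip_tail_iff {l : List V} {u v : V} :
    (u, v) ∈ l.zip l.tail ↔ ∃ A B, l = A ++ u :: v :: B := by
  rw [List.mem_iff_getElem]
  simp only [List.getElem_zip, List.getElem_tail, Prod.mk.injEq]
  constructor
  · rintro ⟨i, hi, rfl, rfl⟩
    have : i + 1 < l.length := by simpa [Nat.lt_sub_iff_add_lt] using hi
    exact ⟨l.take i, l.drop (i + 2), by simp⟩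
  · rintro ⟨A, B, rfl⟩
    exact ⟨A.length, by simp, by simp, by simp⟩

lemma listGraph_adj {l : List V} {u v : V} :
    (listGraph l).Adj u v ↔
      ((∃ A B, l = A ++ u :: v :: B) ∨ ∃ A B, l = A ++ v :: u :: B) ∧ u ≠ v := by
  simp only [listGraph, SimpleGraph.fromEdgeSet_adj, Set.mem_ofPred_eq, Prod.exists,
    mem_zip_tail_iff, Sym2.eq_iff]
  grind

lemma isChain_listGraph {l : List V} (hl : l.Nodup) : l.IsChain (listGraph l).Adj := by
  rw [List.isChain_iff_forall_rel_of_append_cons_cons]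
  rintro u v A B rfl
  refine listGraph_adj.2 ⟨.inl ⟨A, B, rfl⟩, ?_⟩
  rintro rfl
  simp [List.nodup_append] at hl

lemma listGraph_le {Γ : SimpleGraph V} {l : List V} (hl : l.IsChain Γ.Adj) :
    listGraph l ≤ Γ := by
  rw [List.isChain_iff_forall_rel_of_append_cons_cons] at hl
  intro u v huv
  rcases (listGraph_adj.1 huv).1 with ⟨A, B, h⟩ | ⟨A, B, h⟩
  · exact hl h
  · exact (hl h).symm

namespace IsPathOn

variable {Γ Γ' : SimpleGraph V} {l : List V}

lemma isChain (h : IsPathOn Γ l) : l.IsChain Γ.Adj := h.2.2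

lemma mono (hle : Γ ≤ Γ') (h : IsPathOn Γ l) : IsPathOn Γ' l :=
  ⟨h.1, h.2.1, h.isChain.imp fun _ _ hab => hle hab⟩

lemma reverse (h : IsPathOn Γ l) : IsPathOn Γ l.reverse :=
  ⟨by simpa using h.1, List.nodup_reverse.2 h.2.1,
    List.isChain_reverse.2 (h.isChain.imp fun _ _ hab => hab.symm)⟩

lemma cons {x y : V} (h : IsPathOn Γ l) (hx : l.head? = some x) (hxy : Γ.Adj y x) (hy : y ∉ l) :
    IsPathOn Γ (y :: l) := by
  obtain ⟨t, rfl⟩ := List.head?_eq_some_iff.1 hx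
  exact ⟨by simp, List.nodup_cons.2 ⟨hy, h.2.1⟩, List.isChain_cons_cons.2 ⟨hxy, h.isChain⟩⟩

lemma rotate {A B : List V} {x y z : V} (h : IsPathOn Γ (A ++ z :: y :: B))
    (hx : (A ++ z :: y :: B).head? = some x) (hxy : Γ.Adj x y) :
    IsPathOn Γ (z :: A.reverse ++ y :: B) := by
  have hperm : (z :: A.reverse ++ y :: B).Perm (A ++ z :: y :: B) := by
    simpa using (List.reverse_perm (A ++ [z])).append_right (y :: B)
  have hchain := List.isChain_append_cons_cons.1 h.isChain
  have hlast : (z :: A.reverse).getLast? = some x := by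
    rw [← hx]; cases A <;> simp [List.getLast?_cons]
  refine ⟨by simp, hperm.nodup_iff.2 h.2.1, List.isChain_append.2 ⟨?_, hchain.2.2, ?_⟩⟩
  · simpa using List.isChain_reverse.2 (hchain.1.imp fun _ _ hab => hab.symm)
  · simpa [hlast] using hxy

end IsPathOn

end Lists

section Rotation

variable [DecidableEq V]

/-- The successor of `z` on the path `l`; the junk value is `z` itself when `z` is the last vertex
of `l` or does not occur in `l`. -/
def succOn (l : List V) (z : V) : V := l.getD (l.idxOf z + 1) z

/-- The rotation of the path `l`, with fixed last vertex, whose new first vertex is `z`: the initial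
segment of `l` ending in `z` is reversed. -/
def rotation (l : List V) (z : V) : List V :=
  (l.take (l.idxOf z + 1)).reverse ++ l.drop (l.idxOf z + 1)

lemma idxOf_append_cons_of_nodup {A B : List V} {z : V} (h : (A ++ z :: B).Nodup) :
    (A ++ z :: B).idxOf z = A.length := by
  have hz : z ∉ A := fun hz => (List.nodup_cons.1 (List.nodup_middle.1 h)).1 (by simp [hz])
  simp [List.idxOf_append_of_notMem hz]

lemma succOn_append_cons_cons {A B : List V} {y z : V} (h : (A ++ z :: y :: B).Nodup) :
    succOn (A ++ z :: y :: B) z = y := by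
  simp [succOn, idxOf_append_cons_of_nodup h]

lemma rotation_append_cons {A B : List V} {z : V} (h : (A ++ z :: B).Nodup) :
    rotation (A ++ z :: B) z = z :: A.reverse ++ B := by
  simp [rotation, idxOf_append_cons_of_nodup h, List.take_append, List.drop_append,
    List.take_of_length_le A.length.le_succ, List.drop_of_length_le A.length.le_succ]

lemma eq_succOn_of_listGraph_adj {P : List V} (hP : P.Nodup) {u v : V}
    (h : (listGraph P).Adj u v) : v = succOn P u ∨ v = succOn P.reverse u := by
  rcases (listGraph_adj.1 h).1 with ⟨A, B, rfl⟩ | ⟨A, B, rfl⟩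
  · exact .inl (succOn_append_cons_cons hP).symm
  · have hrev : (A ++ v :: u :: B).reverse = B.reverse ++ u :: v :: A.reverse := by simp
    rw [hrev]
    exact .inr (succOn_append_cons_cons (hrev ▸ List.nodup_reverse.2 hP)).symm

/-- The vertices of `R` together with their neighbours along the path `P`. -/
def pathHull (P : List V) (R : Finset V) : Finset V :=
  R ∪ R.image (succOn P) ∪ R.image (succOn P.reverse)

lemma subset_pathHull (P : List V) (R : Finset V) : R ⊆ pathHull P R :=
  Finset.subset_union_left.trans Finset.subset_union_left

lemma card_pathHull_le (P : List V) (R : Finset V) : (pathHull P R).card ≤ 3 * R.card :=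
  calc (pathHull P R).card
      ≤ R.card + (R.image (succOn P)).card + (R.image (succOn P.reverse)).card :=
        (Finset.card_union_le _ _).trans (by gcongr; exact Finset.card_union_le _ _)
    _ ≤ R.card + R.card + R.card :=
        add_le_add (add_le_add_right Finset.card_image_le _) Finset.card_image_le
    _ = 3 * R.card := by ring

lemma pathHull_mono (P : List V) : Monotone (pathHull P) := by
  intro R R' h
  unfold pathHull
  gcongr

/-- The graph in which rotations starting from `P` with set of endpoints `R` take place: the path
`P` together with the edges of `K` inside `pathHull P R`. -/
def rotationGraph (K : SimpleGraph V) (P : List V) (R : Finset V) : SimpleGraph V :=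
  listGraph P ⊔ (K.induce (pathHull P R : Set V)).spanningCoe

lemma rotationGraph_adj {K : SimpleGraph V} {P : List V} {R : Finset V} {u v : V} :
    (rotationGraph K P R).Adj u v ↔
      (listGraph P).Adj u v ∨ u ∈ pathHull P R ∧ v ∈ pathHull P R ∧ K.Adj u v := by
  simp [rotationGraph, SimpleGraph.map_adj, and_left_comm]

lemma rotationGraph_mono (K : SimpleGraph V) (P : List V) : Monotone (rotationGraph K P) := by
  intro R R' h u v
  simp only [rotationGraph_adj]
  exact Or.imp_right fun ⟨hu, hv, huv⟩ => ⟨pathHull_mono P h hu, pathHull_mono P h hv, huv⟩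

lemma rotationGraph_le (K : SimpleGraph V) (P : List V) (R : Finset V) :
    rotationGraph K P R ≤ K ⊔ listGraph P :=
  sup_le le_sup_right ((K.spanningCoe_induce_le _).trans le_sup_left)

lemma mem_pathHull_of_rotationGraph_adj {K : SimpleGraph V} {P : List V} {R : Finset V}
    (hP : P.Nodup) {u v : V} (hu : u ∈ R) (h : (rotationGraph K P R).Adj u v) :
    v ∈ pathHull P R := by
  rcases rotationGraph_adj.1 h with h | ⟨-, hv, -⟩
  · simp only [pathHull, Finset.mem_union, Finset.mem_image]
    rcases eq_succOn_of_listGraph_adj hP h with rfl | rfl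
    · exact .inl (.inr ⟨u, hu, rfl⟩)
    · exact .inr ⟨u, hu, rfl⟩
  · exact hv

/-- All systems `x ↦ q x` of paths that arise from the systems in `𝒜` by at most `m` successive
steps; a step replaces the path at some `z` by the rotation, with new first vertex `z`, of the path
at some `x`. -/
def rotationSystems [Fintype V] (𝒜 : Finset (V → List V)) : ℕ → Finset (V → List V)
  | 0 => 𝒜
  | m + 1 => rotationSystems 𝒜 m ∪
      (rotationSystems 𝒜 m ×ˢ (Finset.univ : Finset (V × V))).image
        fun t => Function.update t.1 t.2.2 (rotation (t.1 t.2.1) t.2.2)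

lemma rotationSystems_mono [Fintype V] (𝒜 : Finset (V → List V)) : Monotone (rotationSystems 𝒜) :=
  monotone_nat_of_le_succ fun _ => Finset.subset_union_left

lemma update_rotation_mem_rotationSystems [Fintype V] {𝒜 : Finset (V → List V)} {m : ℕ}
    {q : V → List V} (hq : q ∈ rotationSystems 𝒜 m) (x z : V) :
    Function.update q z (rotation (q x) z) ∈ rotationSystems 𝒜 (m + 1) :=
  Finset.mem_union_right _ (Finset.mem_image.2 ⟨(q, x, z), by simp [hq], rfl⟩)

lemma card_rotationSystems_le [Fintype V] (𝒜 : Finset (V → List V)) (m : ℕ) :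
    (rotationSystems 𝒜 m).card ≤ 𝒜.card * (1 + Fintype.card V ^ 2) ^ m := by
  induction m with
  | zero => simp [rotationSystems]
  | succ m ih =>
    calc (rotationSystems 𝒜 (m + 1)).card
        ≤ (rotationSystems 𝒜 m).card + (rotationSystems 𝒜 m).card * Fintype.card V ^ 2 := by
          refine (Finset.card_union_le _ _).trans
            (add_le_add_right (Finset.card_image_le.trans_eq ?_) _)
          simp [Finset.card_product, sq]
      _ = (rotationSystems 𝒜 m).card * (1 + Fintype.card V ^ 2) := by ring
      _ ≤ 𝒜.card * (1 + Fintype.card V ^ 2) ^ m * (1 + Fintype.card V ^ 2) := by gcongr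
      _ = 𝒜.card * (1 + Fintype.card V ^ 2) ^ (m + 1) := by ring

/-- A record of Pósa rotations of `P` in `K`: for each `x` in the set `R` of first vertices found so
far, `q x` is a path from `x` to the last vertex of `P` on the vertex set of `P`. -/
structure IsRotationSystem (K : SimpleGraph V) (P : List V) (R : Finset V) (q : V → List V) :
    Prop where
  head : ∀ x ∈ R, (q x).head? = some x
  last : ∀ x ∈ R, (q x).getLast? = P.getLast?
  perm : ∀ x ∈ R, (q x).Perm P
  -- Pósa's observation: an edge of `q x` off `P` has both ends in `R` or next to `R` along `P`
  path : ∀ x ∈ R, IsPathOn (rotationGraph K P R) (q x)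

namespace IsRotationSystem

variable {K : SimpleGraph V} {P : List V} {R : Finset V} {q : V → List V}

lemma singleton {a : V} {t : List V} (h : (a :: t).Nodup) :
    IsRotationSystem K (a :: t) {a} fun _ => a :: t where
  head := by simp
  last := by simp
  perm := by simp
  path _ _ := ⟨by simp, h, (isChain_listGraph h).imp fun _ _ hab => Or.inl hab⟩

lemma isPathOn_sup (hs : IsRotationSystem K P R q) {x : V} (hx : x ∈ R) :
    IsPathOn (K ⊔ listGraph P) (q x) :=
  (hs.path x hx).mono (rotationGraph_le K P R)

lemma insert_update (hs : IsRotationSystem K P R q) {z : V} {l : List V} (hz : z ∉ R)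
    (hhead : l.head? = some z) (hlast : l.getLast? = P.getLast?) (hperm : l.Perm P)
    (hpath : IsPathOn (rotationGraph K P (insert z R)) l) :
    IsRotationSystem K P (insert z R) (Function.update q z l) := by
  have hne : ∀ x ∈ R, x ≠ z := fun x hx => ne_of_mem_of_not_mem hx hz
  constructor <;> refine Finset.forall_mem_insert _ _ _ |>.2 ⟨by simpa, fun x hx => ?_⟩ <;>
    rw [Function.update_of_ne (hne x hx)]
  · exact hs.head x hx
  · exact hs.last x hx
  · exact hs.perm x hx
  · exact (hs.path x hx).mono (rotationGraph_mono K P (Finset.subset_insert z R))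

lemma update_rotation (hs : IsRotationSystem K P R q) {x y z : V} {A B : List V} (hx : x ∈ R)
    (hxy : K.Adj x y) (hq : q x = A ++ z :: y :: B) (hz : z ∉ R) :
    IsRotationSystem K P (insert z R) (Function.update q z (rotation (q x) z)) := by
  have hpath := (hs.path x hx).mono (rotationGraph_mono K P (Finset.subset_insert z R))
  have hP : P.Nodup := (hs.perm x hx).nodup_iff.1 hpath.2.1
  have hhead := hs.head x hx
  have hlast := hs.last x hx
  have hperm := hs.perm x hx
  rw [hq] at hpath hhead hlast hperm ⊢
  have hyhull : y ∈ pathHull P (insert z R) :=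
    mem_pathHull_of_rotationGraph_adj hP (Finset.mem_insert_self z R)
      (List.isChain_append_cons_cons.1 hpath.isChain).2.1
  have hxhull : x ∈ pathHull P (insert z R) :=
    subset_pathHull P _ (Finset.mem_insert_of_mem hx)
  rw [rotation_append_cons hpath.2.1]
  refine hs.insert_update hz (by simp) ?_ (List.Perm.trans ?_ hperm)
    (hpath.rotate hhead (rotationGraph_adj.2 (.inr ⟨hxhull, hyhull, hxy⟩)))
  · simpa [List.getLast?_append, List.getLast?_cons] using hlast
  · simpa using (List.reverse_perm (A ++ [z])).append_right (y :: B)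

lemma exists_eq_append_of_adj (hs : IsRotationSystem K P R q)
    (hmax : IsLongestPathOn (K ⊔ listGraph P) P) {x y : V} (hx : x ∈ R) (hxy : K.Adj x y) :
    ∃ A z B, q x = A ++ z :: y :: B := by
  have hpath := hs.isPathOn_sup hx
  have hy : y ∈ q x := by
    by_contra hy
    have hlong := hmax.2 _ (hpath.cons (hs.head x hx) (Or.inl hxy.symm) hy)
    simp [(hs.perm x hx).length_eq] at hlong
  obtain ⟨A, B, hAB⟩ := List.append_of_mem hy
  rcases List.eq_nil_or_concat A with rfl | ⟨A, z, rfl⟩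
  · have hhead := hs.head x hx
    simp only [hAB, List.nil_append, List.head?_cons, Option.some.injEq] at hhead
    exact absurd hhead.symm hxy.ne
  · exact ⟨A, z, B, by simp [hAB]⟩

end IsRotationSystem

/-- Pósa's rotation lemma, with `R` a maximal set of first vertices obtained by rotations. -/
lemma exists_isRotationSystem_closed [Fintype V] {K : SimpleGraph V} {P : List V}
    (hmax : IsLongestPathOn (K ⊔ listGraph P) P) {𝒜 : Finset (V → List V)}
    (hP𝒜 : (fun _ => P) ∈ 𝒜) :
    ∃ (R : Finset V) (q : V → List V), IsRotationSystem K P R q ∧ R.Nonempty ∧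
      q ∈ rotationSystems 𝒜 (Fintype.card V) ∧
      ∀ x ∈ R, ∀ y, K.Adj x y → y ∈ R.image (succOn (q x)) ∧ y ∈ pathHull P R := by
  obtain ⟨⟨hne, hP, -⟩, -⟩ := id hmax
  obtain ⟨a, t, ht⟩ := List.exists_cons_of_ne_nil hne
  obtain ⟨R, haR, ⟨q, hs, hq⟩, hRmax⟩ := Finite.exists_le_maximal
    (p := fun R : Finset V => ∃ q, IsRotationSystem K P R q ∧ q ∈ rotationSystems 𝒜 R.card)
    (a := {a})
    ⟨fun _ => P, ht ▸ .singleton (ht ▸ hP), rotationSystems_mono 𝒜 (Nat.zero_le _) hP𝒜⟩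
  refine ⟨R, q, hs, ⟨a, haR (Finset.mem_singleton_self a)⟩,
    rotationSystems_mono 𝒜 R.card_le_univ hq, fun x hx y hxy => ?_⟩
  obtain ⟨A, z, B, hqx⟩ := hs.exists_eq_append_of_adj hmax hx hxy
  have hpath := hs.path x hx
  rw [hqx] at hpath
  have hz : z ∈ R := by
    by_contra hz
    refine hz (hRmax ⟨_, hs.update_rotation hx hxy hqx hz, ?_⟩ (Finset.subset_insert z R)
      (Finset.mem_insert_self z R))
    rw [Finset.card_insert_of_notMem hz]
    exact update_rotation_mem_rotationSystems hq x z
  refine ⟨Finset.mem_image.2 ⟨z, hz, ?_⟩, mem_pathHull_of_rotationGraph_adj hP hz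
    (List.isChain_append_cons_cons.1 hpath.isChain).2.1⟩
  rw [hqx, succOn_append_cons_cons hpath.2.1]

end Rotation

/-! ### Edge counts in the binomial random graph -/

section EdgeCounts

open Classical in
/-- The number of pairs in `T` that are adjacent in `G`; an edge counts twice if `T` contains both
of its orientations. -/
noncomputable def adjCount (G : SimpleGraph V) (T : Finset (V × V)) : ℕ :=
  (T.filter fun t => G.Adj t.1 t.2).card

open Classical in
lemma adjCount_eq_sum [Fintype V] [DecidableEq V] (G : SimpleGraph V) (T : Finset (V × V)) :
    adjCount G T = ∑ e ∈ G.edgeFinset, (T.filter fun t => s(t.1, t.2) = e).card := by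
  rw [adjCount, Finset.card_eq_sum_card_fiberwise (f := fun t : V × V => s(t.1, t.2))
    (t := G.edgeFinset) fun t ht => by simpa using (Finset.mem_filter.1 ht).2]
  refine Finset.sum_congr rfl fun e he => congrArg Finset.card ?_
  rw [Finset.filter_filter]
  refine Finset.filter_congr fun t _ => and_iff_right_of_imp ?_
  rintro rfl
  simpa using he

lemma card_filter_mk_eq_le_two [DecidableEq V] {T : Finset (V × V)} (e : Sym2 V) :
    (T.filter fun t => s(t.1, t.2) = e).card ≤ 2 := by
  induction e using Sym2.ind with
  | _ x y =>
    refine (Finset.card_le_card (t := {(x, y), (y, x)}) fun t ht => ?_).trans Finset.card_le_two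
    obtain ⟨a, b⟩ := t
    simpa using (Finset.mem_filter.1 ht).2

lemma adjCount_top {T : Finset (V × V)} (hT : ∀ t ∈ T, t.1 ≠ t.2) :
    adjCount (⊤ : SimpleGraph V) T = T.card := by
  unfold adjCount
  congr 1
  ext t
  simpa using hT t

open Classical in
lemma deg_eq_card_filter [Fintype V] (G : SimpleGraph V) (v : V) :
    deg G v = (Finset.univ.filter fun y => G.Adj v y).card := by
  rw [deg, ← Set.ncard_coe_finset]
  congr 1
  ext y
  simp

lemma deg_eq_adjCount [Fintype V] [DecidableEq V] (G : SimpleGraph V) (v : V) :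
    deg G v = adjCount G ((Finset.univ.erase v).image (Prod.mk v)) := by
  classical
  rw [deg_eq_card_filter, adjCount, Finset.filter_image,
    Finset.card_image_of_injective _ (Prod.mk_right_injective v)]
  congr 1
  ext y
  simpa using fun h : G.Adj v y => h.ne'

variable [Finite V] {G K : SimpleGraph V}

lemma deg_le_deg_sdiff_add (G H : SimpleGraph V) (v : V) :
    deg G v ≤ deg (G \ H) v + deg H v := by
  classical
  have := Fintype.ofFinite V
  simp only [deg_eq_card_filter]
  refine (Finset.card_le_card fun y hy => ?_).trans (Finset.card_union_le _ _)
  simp only [Finset.mem_filter, Finset.mem_union, SimpleGraph.sdiff_adj] at hy ⊢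
  tauto

lemma sum_deg_le_adjCount (hKG : K ≤ G) {X : Finset V} {T : Finset (V × V)}
    (hT : ∀ x ∈ X, ∀ y, K.Adj x y → (x, y) ∈ T) : ∑ x ∈ X, deg K x ≤ adjCount G T := by
  classical
  have := Fintype.ofFinite V
  calc ∑ x ∈ X, deg K x = ((X ×ˢ Finset.univ).filter fun t => K.Adj t.1 t.2).card := by
        simp only [deg_eq_card_filter, Finset.card_filter, Finset.sum_product]
    _ ≤ adjCount G T := by
        refine Finset.card_le_card fun t ht => ?_
        simp only [Finset.mem_filter, Finset.mem_product] at ht ⊢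
        exact ⟨hT _ ht.1.1 _ ht.2, hKG ht.2⟩

lemma lt_card_of_neighbors_subset (hKG : K ≤ G) {R W : Finset V} {d m : ℝ} {c : ℕ}
    (hRW : R ⊆ W) (hcard : W.card ≤ c * R.card) (hW : ∀ x ∈ R, ∀ y, K.Adj x y → y ∈ W)
    (hdeg : ∀ x ∈ R, d ≤ deg K x)
    (hsparse : W.card ≤ m → c * adjCount G W.offDiag < d * W.card) : m < W.card := by
  by_contra! hm
  have hd : 0 < d :=
    pos_of_mul_pos_left ((by positivity : (0 : ℝ) ≤ _).trans_lt (hsparse hm)) (Nat.cast_nonneg _)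
  have hsum : (∑ x ∈ R, (deg K x : ℝ)) ≤ adjCount G W.offDiag := by
    exact_mod_cast sum_deg_le_adjCount hKG fun x hx y hxy =>
      Finset.mem_offDiag.2 ⟨hRW hx, hW x hx y hxy, hxy.ne⟩
  refine (hsparse hm).not_ge ?_
  calc d * W.card ≤ d * (c * R.card) := by
        gcongr
        exact_mod_cast hcard
    _ = c * (R.card * d) := by ring
    _ ≤ c * adjCount G W.offDiag := by
        gcongr
        exact le_trans (by simpa using Finset.card_nsmul_le_sum R _ d hdeg) hsum

end EdgeCounts

section Probability

variable {n : ℕ} {p : ℝ}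

lemma weight_nonneg (hp0 : 0 ≤ p) (hp1 : p ≤ 1) (G : SimpleGraph (Fin n)) : 0 ≤ weight n p G :=
  mul_nonneg (pow_nonneg hp0 _) (pow_nonneg (sub_nonneg.2 hp1) _)

open Classical in
lemma sum_weight_mul_prod (f : Sym2 (Fin n) → ℝ) :
    ∑ G : SimpleGraph (Fin n), weight n p G * ∏ e ∈ G.edgeFinset, f e
      = ∏ e ∈ (⊤ : SimpleGraph (Fin n)).edgeFinset, (p * f e + (1 - p)) := by
  rw [Finset.prod_add]
  refine Finset.sum_bij' (fun G _ => G.edgeFinset)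
    (fun s _ => SimpleGraph.fromEdgeSet (s : Set (Sym2 (Fin n))))
    (fun G _ => Finset.mem_powerset.2 (SimpleGraph.edgeFinset_mono le_top))
    (fun _ _ => Finset.mem_univ _) (fun G _ => by simp) (fun s hs => ?_) (fun G _ => ?_)
  · ext e
    have he : e ∈ s → ¬e.IsDiag := fun he => by simpa using Finset.mem_powerset.1 hs he
    simpa using he
  · have hcard : G.edgeSet.ncard = G.edgeFinset.card := by
      rw [← SimpleGraph.coe_edgeFinset, Set.ncard_coe_finset]
    rw [Finset.prod_mul_distrib, Finset.prod_const, Finset.prod_const,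
      Finset.card_sdiff_of_subset (SimpleGraph.edgeFinset_mono le_top), weight, hcard,
      SimpleGraph.card_edgeFinset_top_eq_card_choose_two, Fintype.card_fin]
    ring

lemma sum_weight : ∑ G : SimpleGraph (Fin n), weight n p G = 1 := by
  simpa using sum_weight_mul_prod (n := n) (p := p) fun _ => 1

lemma Pr_add_Pr_not (Q : SimpleGraph (Fin n) → Prop) :
    Pr n p Q + Pr n p (fun G => ¬Q G) = 1 := by
  rw [← sum_weight (n := n) (p := p), Pr, Pr, ← Finset.sum_add_distrib]
  refine Finset.sum_congr rfl fun G _ => ?_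
  by_cases hQ : Q G <;> simp [hQ]

lemma Pr_mono (hp0 : 0 ≤ p) (hp1 : p ≤ 1) {Q Q' : SimpleGraph (Fin n) → Prop}
    (h : ∀ G, Q G → Q' G) : Pr n p Q ≤ Pr n p Q' := by
  refine Finset.sum_le_sum fun G _ => ?_
  have hw := weight_nonneg hp0 hp1 G
  by_cases hQ : Q G
  · simp [hQ, h G hQ]
  · simpa [hQ] using by split_ifs <;> simp [hw]

lemma Pr_or_le (hp0 : 0 ≤ p) (hp1 : p ≤ 1) (Q Q' : SimpleGraph (Fin n) → Prop) :
    Pr n p (fun G => Q G ∨ Q' G) ≤ Pr n p Q + Pr n p Q' := by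
  rw [Pr, Pr, Pr, ← Finset.sum_add_distrib]
  refine Finset.sum_le_sum fun G _ => ?_
  have hw := weight_nonneg hp0 hp1 G
  by_cases hQ : Q G <;> by_cases hQ' : Q' G <;> simp [hQ, hQ', hw]

lemma Pr_exists_le (hp0 : 0 ≤ p) (hp1 : p ≤ 1) {ι : Type*} (s : Finset ι)
    (Q : ι → SimpleGraph (Fin n) → Prop) :
    Pr n p (fun G => ∃ i ∈ s, Q i G) ≤ ∑ i ∈ s, Pr n p (Q i) := by
  classical
  induction s using Finset.induction_on with
  | empty => simp [Pr]
  | insert i s hi ih =>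
    rw [Finset.sum_insert hi]
    simp only [Finset.exists_mem_insert]
    exact (Pr_or_le hp0 hp1 _ _).trans (add_le_add_right ih _)

open Classical in
/-- Markov's inequality applied to the exponential of a linear function of the edge indicators. -/
lemma Pr_le_sum_edgeFinset_le (hp0 : 0 ≤ p) (hp1 : p ≤ 1) (a : Sym2 (Fin n) → ℝ) (m : ℝ) :
    Pr n p (fun G => m ≤ ∑ e ∈ G.edgeFinset, a e)
      ≤ exp (-m + p * ∑ e ∈ (⊤ : SimpleGraph (Fin n)).edgeFinset, (exp (a e) - 1)) := by
  calc Pr n p (fun G => m ≤ ∑ e ∈ G.edgeFinset, a e)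
      ≤ ∑ G : SimpleGraph (Fin n), exp (-m) * (weight n p G * ∏ e ∈ G.edgeFinset, exp (a e)) := by
        refine Finset.sum_le_sum fun G _ => ?_
        have hw := weight_nonneg hp0 hp1 G
        split_ifs with h
        · rw [← Real.exp_sum, mul_left_comm, ← Real.exp_add]
          exact le_mul_of_one_le_right hw (Real.one_le_exp (by linarith))
        · positivity
    _ = exp (-m) * ∏ e ∈ (⊤ : SimpleGraph (Fin n)).edgeFinset, (p * exp (a e) + (1 - p)) := by
        rw [← Finset.mul_sum, sum_weight_mul_prod]
    _ ≤ exp (-m) * ∏ e ∈ (⊤ : SimpleGraph (Fin n)).edgeFinset, exp (p * (exp (a e) - 1)) := by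
        have : 0 ≤ 1 - p := sub_nonneg.2 hp1
        gcongr with e _
        linarith [Real.add_one_le_exp (p * (exp (a e) - 1))]
    _ = _ := by rw [← Real.exp_sum, ← Real.exp_add, Finset.mul_sum]

/-- Positive `l` give the upper tail and negative `l` the lower tail. The term `2 * l ^ 2` allows
for edges that are counted twice. -/
lemma Pr_mul_le_mul_adjCount_le (hp0 : 0 ≤ p) (hp1 : p ≤ 1) {T : Finset (Fin n × Fin n)}
    (hT : ∀ t ∈ T, t.1 ≠ t.2) {l : ℝ} (hl : |l| ≤ 1 / 2) (m : ℝ) :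
    Pr n p (fun G => l * m ≤ l * adjCount G T)
      ≤ exp (-(l * m) + p * ((l + 2 * l ^ 2) * T.card)) := by
  classical
  let c : Sym2 (Fin n) → ℝ := fun e => (T.filter fun t => s(t.1, t.2) = e).card
  have hadj (G : SimpleGraph (Fin n)) : (adjCount G T : ℝ) = ∑ e ∈ G.edgeFinset, c e := by
    rw [adjCount_eq_sum]
    push_cast
    rfl
  have hcard : (T.card : ℝ) = ∑ e ∈ (⊤ : SimpleGraph (Fin n)).edgeFinset, c e := by
    rw [← adjCount_top hT, hadj]
    congr!
  simp_rw [hadj, Finset.mul_sum]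
  refine (Pr_le_sum_edgeFinset_le hp0 hp1 (fun e => l * c e) (l * m)).trans ?_
  rw [hcard, Finset.mul_sum (a := l + 2 * l ^ 2)]
  gcongr with e _
  have hc2 : c e ≤ 2 := Nat.cast_le_ofNat.2 (card_filter_mk_eq_le_two e)
  have hc0 : 0 ≤ c e := Nat.cast_nonneg _
  have habs : |l * c e| ≤ 1 := by
    rw [abs_mul, abs_of_nonneg hc0]
    nlinarith [abs_nonneg l]
  calc exp (l * c e) - 1 ≤ l * c e + (l * c e) ^ 2 := by
        linarith [(abs_le.1 (Real.abs_exp_sub_one_sub_id_le habs)).2]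
    _ ≤ (l + 2 * l ^ 2) * c e := by
        nlinarith [mul_nonneg (mul_nonneg hc0 (sub_nonneg.2 hc2)) (sq_nonneg l)]

section Chernoff

variable {T : Finset (Fin n × Fin n)} {g M : ℝ}

lemma Pr_add_le_adjCount_le (hp0 : 0 ≤ p) (hp1 : p ≤ 1) (hT : ∀ t ∈ T, t.1 ≠ t.2)
    (hM : T.card ≤ M) (hg0 : 0 < g) (hg2 : g ≤ 2) :
    Pr n p (fun G => p * T.card + g * (p * M) ≤ adjCount G T) ≤ exp (-(g ^ 2 / 8 * (p * M))) := by
  have habs : |g / 4| ≤ 1 / 2 := abs_le.2 ⟨by linarith, by linarith⟩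
  have hpM : p * T.card ≤ p * M := by gcongr
  calc Pr n p (fun G => p * T.card + g * (p * M) ≤ adjCount G T)
      ≤ Pr n p (fun G => g / 4 * (p * T.card + g * (p * M)) ≤ g / 4 * adjCount G T) :=
        Pr_mono hp0 hp1 fun G hG => by gcongr
    _ ≤ _ := Pr_mul_le_mul_adjCount_le hp0 hp1 hT habs _
    _ ≤ exp (-(g ^ 2 / 8 * (p * M))) := by
        gcongr
        nlinarith [sq_nonneg g]

lemma Pr_adjCount_le_sub_le (hp0 : 0 ≤ p) (hp1 : p ≤ 1) (hT : ∀ t ∈ T, t.1 ≠ t.2)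
    (hM : T.card ≤ M) (hg0 : 0 < g) (hg2 : g ≤ 2) :
    Pr n p (fun G => adjCount G T ≤ p * T.card - g * (p * M)) ≤ exp (-(g ^ 2 / 8 * (p * M))) := by
  have habs : |-(g / 4)| ≤ 1 / 2 := abs_le.2 ⟨by linarith, by linarith⟩
  have hpM : p * T.card ≤ p * M := by gcongr
  calc Pr n p (fun G => adjCount G T ≤ p * T.card - g * (p * M))
      ≤ Pr n p (fun G => -(g / 4) * (p * T.card - g * (p * M)) ≤ -(g / 4) * adjCount G T) :=
        Pr_mono hp0 hp1 fun G hG => mul_le_mul_of_nonpos_left hG (by linarith)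
    _ ≤ _ := Pr_mul_le_mul_adjCount_le hp0 hp1 hT habs _
    _ ≤ exp (-(g ^ 2 / 8 * (p * M))) := by
        gcongr
        nlinarith [sq_nonneg g]

end Chernoff

lemma Pr_exists_deg_le_le (hp0 : 0 ≤ p) (hp1 : p ≤ 1) {g : ℝ} (hg0 : 0 < g) (hg2 : g ≤ 2) :
    Pr n p (fun G => ∃ v, (deg G v : ℝ) ≤ (n - 1) * p - g * (p * n))
      ≤ n * exp (-(g ^ 2 / 8 * (p * n))) := by
  let star (v : Fin n) := (Finset.univ.erase v).image (Prod.mk v)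
  have hstar (v : Fin n) : ((star v).card : ℝ) = n - 1 := by
    rw [Finset.card_image_of_injective _ (Prod.mk_right_injective v),
      Finset.cast_card_erase_of_mem (Finset.mem_univ v), Finset.card_univ, Fintype.card_fin]
  calc Pr n p (fun G => ∃ v, (deg G v : ℝ) ≤ (n - 1) * p - g * (p * n))
      = Pr n p (fun G => ∃ v ∈ Finset.univ,
          (adjCount G (star v) : ℝ) ≤ p * (star v).card - g * (p * n)) := by
        simp only [deg_eq_adjCount, hstar, Finset.mem_univ, true_and, mul_comm p, star]
    _ ≤ ∑ v : Fin n, exp (-(g ^ 2 / 8 * (p * n))) :=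
        (Pr_exists_le hp0 hp1 _ _).trans <| Finset.sum_le_sum fun v _ =>
          Pr_adjCount_le_sub_le hp0 hp1 (by grind) (by rw [hstar]; linarith) hg0 hg2
    _ = n * exp (-(g ^ 2 / 8 * (p * n))) := by simp

lemma sum_pow_card_filter_nonempty_le {α : Type*} [Fintype α] {x : ℝ} (hx0 : 0 ≤ x)
    (hx1 : Fintype.card α * x ≤ 1) :
    ∑ W : Finset α with W.Nonempty, x ^ W.card ≤ 2 * (Fintype.card α * x) := by
  classical
  have hsum : ∑ W : Finset α, x ^ W.card = (x + 1) ^ Fintype.card α := by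
    simpa using Fintype.sum_pow_mul_eq_add_pow α x 1
  have hsplit : ∑ W : Finset α, x ^ W.card = ∑ W : Finset α with W.Nonempty, x ^ W.card + 1 := by
    rw [← Finset.sum_filter_add_sum_filter_not Finset.univ (fun W : Finset α => W.Nonempty)]
    simp [Finset.filter_eq']
  have hexp : (x + 1) ^ Fintype.card α ≤ exp (Fintype.card α * x) := by
    rw [Real.exp_nat_mul]
    exact pow_le_pow_left₀ (by linarith) (Real.add_one_le_exp x) _
  have h0 : 0 ≤ Fintype.card α * x := by positivity
  have habs := Real.abs_exp_sub_one_le (x := Fintype.card α * x) (by rwa [abs_of_nonneg h0])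
  rw [abs_of_nonneg h0] at habs
  linarith [le_abs_self (exp (Fintype.card α * x) - 1)]

lemma Pr_dense_le (hp0 : 0 ≤ p) (hp1 : p ≤ 1) {c : ℝ} (hc : 0 ≤ c) (W : Finset (Fin n)) :
    Pr n p (fun G => W.card ≤ c / 4 * n ∧ c * (p * n) * W.card ≤ adjCount G W.offDiag)
      ≤ exp (-(3 / 16 * c * (p * n))) ^ W.card := by
  by_cases hW : (W.card : ℝ) ≤ c / 4 * n
  · have hcn : 0 ≤ c * n * W.card := by positivity
    have hoff : (W.offDiag.card : ℝ) ≤ c / 4 * n * W.card := by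
      calc (W.offDiag.card : ℝ) ≤ W.card * W.card := by
            rw [Finset.offDiag_card]
            exact_mod_cast Nat.sub_le _ _
        _ ≤ _ := by gcongr
    calc Pr n p (fun G => W.card ≤ c / 4 * n ∧ c * (p * n) * W.card ≤ adjCount G W.offDiag)
        ≤ Pr n p (fun G => p * W.offDiag.card + 2 * (p * (3 / 8 * c * n * W.card))
            ≤ adjCount G W.offDiag) := by
          refine Pr_mono hp0 hp1 fun G hG => le_trans ?_ hG.2
          linarith [mul_le_mul_of_nonneg_left hoff hp0]
      _ ≤ exp (-(2 ^ 2 / 8 * (p * (3 / 8 * c * n * W.card)))) :=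
          Pr_add_le_adjCount_le hp0 hp1 (fun t ht => (Finset.mem_offDiag.1 ht).2.2)
            (by linarith) two_pos le_rfl
      _ = exp (-(3 / 16 * c * (p * n))) ^ W.card := by
          rw [← Real.exp_nat_mul]
          ring_nf
  · simp only [hW, false_and, Pr, if_false, Finset.sum_const_zero]
    positivity

lemma Pr_exists_dense_le (hp0 : 0 ≤ p) (hp1 : p ≤ 1) {c : ℝ} (hc : 0 ≤ c)
    (hexp : n * exp (-(3 / 16 * c * (p * n))) ≤ 1) :
    Pr n p (fun G => ∃ W : Finset (Fin n), W.Nonempty ∧ W.card ≤ c / 4 * n ∧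
        c * (p * n) * W.card ≤ adjCount G W.offDiag)
      ≤ 2 * (n * exp (-(3 / 16 * c * (p * n)))) := by
  calc _ ≤ Pr n p (fun G => ∃ W ∈ Finset.univ.filter (fun W : Finset (Fin n) => W.Nonempty),
          W.card ≤ c / 4 * n ∧ c * (p * n) * W.card ≤ adjCount G W.offDiag) :=
        Pr_mono hp0 hp1 fun G => by simp
    _ ≤ ∑ W : Finset (Fin n) with W.Nonempty, exp (-(3 / 16 * c * (p * n))) ^ W.card :=
        (Pr_exists_le hp0 hp1 _ _).trans (Finset.sum_le_sum fun W _ => Pr_dense_le hp0 hp1 hc W)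
    _ ≤ 2 * (n * exp (-(3 / 16 * c * (p * n)))) := by
        simpa using sum_pow_card_filter_nonempty_le (α := Fin n) (by positivity) (by simpa)

lemma Pr_exists_add_le_adjCount_le (hp0 : 0 ≤ p) (hp1 : p ≤ 1)
    {𝒯 : Finset (Finset (Fin n × Fin n))} (h𝒯 : ∀ T ∈ 𝒯, ∀ t ∈ T, t.1 ≠ t.2) {g : ℝ}
    (hg0 : 0 < g) (hg2 : g ≤ 2) :
    Pr n p (fun G => ∃ T ∈ 𝒯, p * T.card + g * (p * n ^ 2) ≤ adjCount G T)
      ≤ 𝒯.card * exp (-(g ^ 2 / 8 * (p * n ^ 2))) := by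
  refine (Pr_exists_le hp0 hp1 𝒯 _).trans ?_
  rw [← nsmul_eq_mul]
  refine Finset.sum_le_card_nsmul _ _ _ fun T hT =>
    Pr_add_le_adjCount_le hp0 hp1 (h𝒯 T hT) ?_ hg0 hg2
  exact_mod_cast T.card_le_univ.trans_eq (by simp [sq])

end Probability

/-! ### Typical graphs -/

section PathSystems

variable [DecidableEq V]

/-- The pairs `(x, y)` with `x ∈ X` and `y ≠ x` the successor on `q x` of a vertex of `R`. If `R` is
the set of first vertices of a closed system of rotations `q`, all edges at `X ⊆ R` are such
pairs. -/
def succPairs (q : V → List V) (X R : Finset V) : Finset (V × V) :=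
  ((X ×ˢ R).image fun t => (t.1, succOn (q t.1) t.2)).filter fun t => t.1 ≠ t.2

lemma mk_mem_succPairs {q : V → List V} {X R : Finset V} {x y : V} :
    (x, y) ∈ succPairs q X R ↔ x ∈ X ∧ y ∈ R.image (succOn (q x)) ∧ x ≠ y := by
  simp only [succPairs, Finset.mem_filter, Finset.mem_image, Finset.mem_product, Prod.exists,
    Prod.mk.injEq]
  grind

lemma card_succPairs_le (q : V → List V) (X R : Finset V) :
    (succPairs q X R).card ≤ X.card * R.card :=
  (Finset.card_filter_le _ _).trans (Finset.card_image_le.trans (Finset.card_product _ _).le)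

variable [Fintype V]

variable (V) in
/-- The systems `fun _ => P` of paths in which the path does not depend on the vertex, where `P` is
a list of at most `Fintype.card V` vertices. -/
def constSystems : Finset (V → List V) :=
  Finset.univ.image fun (t : Σ k : Fin (Fintype.card V + 1), Fin k → V) _ => List.ofFn t.2

variable (V) in
/-- The systems of paths that can be reached from a constant system by Pósa rotations. -/
def pathSystems : Finset (V → List V) := rotationSystems (constSystems V) (Fintype.card V)

lemma const_mem_constSystems {P : List V} (hP : P.Nodup) : (fun _ => P) ∈ constSystems V :=
  Finset.mem_image.2 ⟨⟨⟨P.length, Nat.lt_succ_of_le hP.length_le_card⟩, P.get⟩, Finset.mem_univ _,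
    funext fun _ => List.ofFn_get P⟩

lemma const_mem_pathSystems {P : List V} (hP : P.Nodup) : (fun _ => P) ∈ pathSystems V :=
  rotationSystems_mono _ (Nat.zero_le _) (const_mem_constSystems hP)

lemma card_constSystems_le [Nonempty V] :
    (constSystems V).card ≤ (Fintype.card V + 1) * Fintype.card V ^ Fintype.card V :=
  calc (constSystems V).card
      ≤ ∑ k : Fin (Fintype.card V + 1), Fintype.card V ^ (k : ℕ) :=
        Finset.card_image_le.trans_eq (by simp [Fintype.card_sigma])
    _ ≤ ∑ _k : Fin (Fintype.card V + 1), Fintype.card V ^ Fintype.card V :=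
        Finset.sum_le_sum fun k _ => Nat.pow_le_pow_right Fintype.card_pos (Nat.le_of_lt_succ k.2)
    _ = _ := by simp

variable (V) in
/-- All the sets `succPairs q X R` of pairs that come from systems reachable by rotations. -/
def succPairSets : Finset (Finset (V × V)) :=
  (pathSystems V ×ˢ (Finset.univ : Finset (Finset V × Finset V))).image
    fun t => succPairs t.1 t.2.1 t.2.2

lemma card_succPairSets_le (hV : 3 ≤ Fintype.card V) :
    (succPairSets V).card ≤ Fintype.card V ^ (6 * Fintype.card V + 2) := by
  have : Nonempty V := Fintype.card_pos_iff.1 (by omega)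
  set N := Fintype.card V with hN
  calc (succPairSets V).card ≤ (pathSystems V).card * (2 ^ N * 2 ^ N) :=
        Finset.card_image_le.trans_eq (by simp [Finset.card_product, hN])
    _ ≤ (N + 1) * N ^ N * (1 + N ^ 2) ^ N * (2 ^ N * 2 ^ N) := by
        gcongr
        exact (card_rotationSystems_le _ _).trans (by gcongr; exact card_constSystems_le)
    _ ≤ N ^ 2 * N ^ N * (N ^ 3) ^ N * (N ^ N * N ^ N) := by
        gcongr
        · nlinarith
        · nlinarith [Nat.mul_le_mul_right (N ^ 2) hV]
        · omega
        · omega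
    _ = N ^ (6 * N + 2) := by ring

end PathSystems

section Typical

variable {n : ℕ} {p ε : ℝ}

/-- The pseudorandomness of `G_{n,p}` on which the deterministic part of the argument rests: no
vertex has small degree, small sets of vertices are sparse, and there are not many more edges than
expected on any of the sets of pairs that come from rotations. -/
structure IsTypical (n : ℕ) (p ε : ℝ) (G : SimpleGraph (Fin n)) : Prop where
  degree : ∀ v, (n - 1) * p - ε / 8 * (p * n) < deg G v
  sparse : ∀ W : Finset (Fin n), W.Nonempty → W.card ≤ ε / 24 * n →
    adjCount G W.offDiag < ε / 6 * (p * n) * W.card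
  rotations : ∀ q ∈ pathSystems (Fin n), ∀ X R : Finset (Fin n),
    adjCount G (succPairs q X R) < p * (X.card * R.card) + ε ^ 2 / 576 * (p * n ^ 2)

lemma exp_neg_le_inv_pow {k : ℕ} {x t : ℝ} (hx : 0 < x) (h : k * log x ≤ t) :
    exp (-t) ≤ (x ^ k)⁻¹ := by
  rw [Real.exp_neg, ← Real.exp_log (pow_pos hx k), Real.log_pow]
  gcongr

lemma Pr_exists_deg_le_le_inv (hp0 : 0 ≤ p) (hp1 : p ≤ 1) (hε0 : 0 < ε) (hε1 : ε < 1)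
    (hn : 0 < n) (hlog : 2 * log n ≤ ε ^ 2 / 512 * (p * n)) :
    Pr n p (fun G => ∃ v, (deg G v : ℝ) ≤ (n - 1) * p - ε / 8 * (p * n)) ≤ (n : ℝ)⁻¹ := by
  have hn' : (0 : ℝ) < n := Nat.cast_pos.2 hn
  calc _ ≤ n * exp (-((ε / 8) ^ 2 / 8 * (p * n))) :=
        Pr_exists_deg_le_le hp0 hp1 (by linarith) (by linarith)
    _ ≤ n * (n ^ 2 : ℝ)⁻¹ := by
        gcongr
        exact exp_neg_le_inv_pow hn' (by push_cast; linarith)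
    _ = (n : ℝ)⁻¹ := by field_simp

lemma Pr_exists_dense_le_inv (hp0 : 0 ≤ p) (hp1 : p ≤ 1) (hε0 : 0 < ε) (hn : 2 ≤ n)
    (hlog : 3 * log n ≤ ε / 32 * (p * n)) :
    Pr n p (fun G => ∃ W : Finset (Fin n), W.Nonempty ∧ W.card ≤ ε / 24 * n ∧
      ε / 6 * (p * n) * W.card ≤ adjCount G W.offDiag) ≤ (n : ℝ)⁻¹ := by
  have hn' : (2 : ℝ) ≤ n := by exact_mod_cast hn
  have hexp : n * exp (-(3 / 16 * (ε / 6) * (p * n))) ≤ (n ^ 2 : ℝ)⁻¹ :=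
    calc n * exp (-(3 / 16 * (ε / 6) * (p * n))) ≤ n * (n ^ 3 : ℝ)⁻¹ := by
          gcongr
          exact exp_neg_le_inv_pow (by linarith) (by push_cast; linarith)
      _ = (n ^ 2 : ℝ)⁻¹ := by field_simp
  have hdense := Pr_exists_dense_le hp0 hp1 (c := ε / 6) (by linarith)
    (hexp.trans (inv_le_one_of_one_le₀ (by nlinarith)))
  rw [show ε / 6 / 4 = ε / 24 by ring] at hdense
  calc _ ≤ _ := hdense
    _ ≤ n * (n ^ 2 : ℝ)⁻¹ := by gcongr
    _ = (n : ℝ)⁻¹ := by field_simp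

lemma Pr_exists_succPairs_le_inv (hp0 : 0 ≤ p) (hp1 : p ≤ 1) (hε0 : 0 < ε) (hε1 : ε < 1)
    (hn : 3 ≤ n) (hlog : (6 * n + 3) * log n ≤ ε ^ 4 / 2654208 * (p * n ^ 2)) :
    Pr n p (fun G => ∃ T ∈ succPairSets (Fin n), p * T.card + ε ^ 2 / 576 * (p * n ^ 2)
      ≤ adjCount G T) ≤ (n : ℝ)⁻¹ := by
  have hn' : (0 : ℝ) < n := by exact_mod_cast (by omega : 0 < n)
  have hcard : ((succPairSets (Fin n)).card : ℝ) ≤ n ^ (6 * n + 2) := by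
    exact_mod_cast by simpa using card_succPairSets_le (V := Fin n) (by simpa)
  calc _ ≤ (succPairSets (Fin n)).card * exp (-((ε ^ 2 / 576) ^ 2 / 8 * (p * n ^ 2))) := by
        refine Pr_exists_add_le_adjCount_le hp0 hp1 ?_ (by positivity) (by nlinarith)
        simp only [succPairSets, Finset.mem_image]
        rintro _ ⟨⟨q, X, R⟩, -, rfl⟩ ⟨x, y⟩ hxy
        exact (mk_mem_succPairs.1 hxy).2.2
    _ ≤ n ^ (6 * n + 2) * (n ^ (6 * n + 3) : ℝ)⁻¹ := by
        gcongr
        exact exp_neg_le_inv_pow hn' (by push_cast; linarith)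
    _ = (n : ℝ)⁻¹ := by
        rw [pow_succ (n : ℝ) (6 * n + 2)]
        field_simp

lemma one_sub_three_div_le_Pr_isTypical (hp0 : 0 ≤ p) (hp1 : p ≤ 1) (hε0 : 0 < ε) (hε1 : ε < 1)
    (hn : 3 ≤ n) (hlog : 10 ^ 8 * log n ≤ ε ^ 4 * (p * n)) :
    1 - 3 / n ≤ Pr n p (IsTypical n p ε) := by
  have hlog0 : 0 ≤ log n := Real.log_natCast_nonneg n
  have hn' : (3 : ℝ) ≤ n := by exact_mod_cast hn
  have hpow {k : ℕ} (hk : k ≤ 4) : ε ^ 4 * (p * n) ≤ ε ^ k * (p * n) :=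
    mul_le_mul_of_nonneg_right (pow_le_pow_of_le_one hε0.le hε1.le hk) (by positivity)
  have hdeg := Pr_exists_deg_le_le_inv (n := n) hp0 hp1 hε0 hε1 (by omega)
    (by linarith [hpow (k := 2) (by norm_num)])
  have hsparse := Pr_exists_dense_le_inv (n := n) hp0 hp1 hε0 (by omega)
    (by linarith [hpow (k := 1) (by norm_num)])
  have hrot := Pr_exists_succPairs_le_inv hp0 hp1 hε0 hε1 hn (by nlinarith)
  have hunion := (Pr_or_le hp0 hp1 _ _).trans
    (add_le_add hdeg ((Pr_or_le hp0 hp1 _ _).trans (add_le_add hsparse hrot)))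
  have hbad : Pr n p (fun G => ¬IsTypical n p ε G) ≤ 3 / n := by
    refine (Pr_mono hp0 hp1 fun G hG => ?_).trans (hunion.trans_eq (by ring))
    contrapose! hG
    obtain ⟨hdeg, hsparse, hrot⟩ := hG
    refine ⟨hdeg, hsparse, fun q hq X R => ?_⟩
    have hT := hrot (succPairs q X R)
      (Finset.mem_image.2 ⟨(q, X, R), Finset.mem_product.2 ⟨hq, Finset.mem_univ _⟩, rfl⟩)
    have hcard : ((succPairs q X R).card : ℝ) ≤ X.card * R.card := by
      exact_mod_cast card_succPairs_le q X R
    linarith [mul_le_mul_of_nonneg_left hcard hp0]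
  linarith [Pr_add_Pr_not (n := n) (p := p) (IsTypical n p ε)]

end Typical

/-! ### Resilience of typical graphs -/

lemma card_le_add_card_filter_le {f : V → ℕ} (hf : f.Injective) (R : Finset V) (k : ℕ) :
    R.card ≤ k + (R.filter fun x => k ≤ f x).card := by
  have hsmall : (R.filter fun x => ¬k ≤ f x).card ≤ (Finset.range k).card :=
    Finset.card_le_card_of_injOn f (fun x hx => by simpa using (Finset.mem_filter.1 hx).2)
      hf.injOn
  rw [Finset.card_range] at hsmall
  have hsplit := Finset.card_filter_add_card_filter_not (s := R) (fun x => k ≤ f x)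
  omega

lemma connected_of_forall_card_lt [Fintype V] [Nonempty V] {K : SimpleGraph V}
    (h : ∀ R : Finset V, R.Nonempty → (∀ x ∈ R, ∀ y, K.Adj x y → y ∈ R) →
      Fintype.card V < 2 * R.card) : K.Connected := by
  classical
  let component (u : V) : Finset V := Finset.univ.filter fun w => K.Reachable u w
  have hlarge (u : V) : Fintype.card V < 2 * (component u).card :=
    h _ ⟨u, by simp [component]⟩ fun x hx y hxy => by
      simpa [component] using (Finset.mem_filter.1 hx).2.trans hxy.reachable
  refine (SimpleGraph.connected_iff K).2 ⟨fun u v => ?_, inferInstance⟩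
  obtain ⟨w, hw⟩ := Finset.inter_nonempty_of_card_lt_card_add_card
    (component u).subset_univ (component v).subset_univ (by
      rw [Finset.card_univ]
      linarith [hlarge u, hlarge v])
  simp only [component, Finset.mem_inter, Finset.mem_filter, Finset.mem_univ, true_and] at hw
  exact hw.1.trans hw.2.symm

section Deterministic

variable {n : ℕ} {p ε δ : ℝ} {G H : SimpleGraph (Fin n)}

/-- Here `f x` is the zero-based position of `x` in the ordering. -/
lemma PosaFamily.exists_injective_le_deg_sdiff (hH : PosaFamily n p ε H) (hp0 : 0 ≤ p)
    (hn : 3 ≤ n) (hG : ∀ v, (n - 1) * p - δ * (p * n) ≤ deg G v) :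
    ∃ f : Fin n → ℕ, f.Injective ∧
      ∀ x, min (f x : ℝ) (n / 2 - 2) * p + (ε - δ) * (p * n) ≤ deg (G \ H) x := by
  obtain ⟨v, hv, hanti, hdeg⟩ := hH
  refine ⟨fun x => (Equiv.ofBijective v hv).symm x, Fin.val_injective.comp (Equiv.injective _),
    fun x => ?_⟩
  obtain ⟨i, rfl⟩ := hv.2 x
  simp only [Equiv.ofBijective_symm_apply_apply]
  -- `(n - 3) / 2` is the last position to which the degree condition applies
  let j : Fin n := ⟨min i ((n - 3) / 2), by omega⟩
  have hnj : n ≤ 2 * ((n - 3) / 2 + 2) := by omega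
  have hjn : 2 * (j.1 + 1) < n := by simp only [j]; omega
  have hmin : min (i : ℝ) (n / 2 - 2) ≤ j.1 := by
    have hnj' : (n : ℝ) ≤ 2 * (((n - 3) / 2 : ℕ) + 2) := by exact_mod_cast hnj
    rw [Nat.cast_min]
    exact min_le_min_left _ (by linarith)
  have hHj := hdeg j (by
    have : (2 * (j.1 + 1) : ℝ) < n := by exact_mod_cast hjn
    linarith)
  have hHi : (deg H (v i) : ℝ) ≤ deg H (v j) := by
    exact_mod_cast hanti j i (Fin.le_def.2 (min_le_left _ _))
  have hsdiff : (deg G (v i) : ℝ) ≤ deg (G \ H) (v i) + deg H (v i) := by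
    exact_mod_cast deg_le_deg_sdiff_add G H (v i)
  linarith [mul_le_mul_of_nonneg_right hmin hp0, hG (v i)]

namespace IsTypical

lemma exists_injective_le_deg_sdiff (hG : IsTypical n p ε G) (hH : PosaFamily n p ε H)
    (hp0 : 0 ≤ p) (hn : 3 ≤ n) :
    ∃ f : Fin n → ℕ, f.Injective ∧
      ∀ x, min (f x : ℝ) (n / 2 - 2) * p + 7 * ε / 8 * (p * n) ≤ deg (G \ H) x := by
  obtain ⟨f, hf, hdeg⟩ := hH.exists_injective_le_deg_sdiff hp0 hn fun v => (hG.degree v).le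
  exact ⟨f, hf, fun x => le_trans (by linarith) (hdeg x)⟩

lemma lt_card_of_neighbors_subset (hG : IsTypical n p ε G) (hH : PosaFamily n p ε H)
    (hp0 : 0 ≤ p) (hn : 3 ≤ n) (hεn : 8 ≤ ε * n) {R W : Finset (Fin n)} (hR : R.Nonempty)
    (hRW : R ⊆ W) (hcard : W.card ≤ 3 * R.card)
    (hW : ∀ x ∈ R, ∀ y, (G \ H).Adj x y → y ∈ W) : ε / 72 * n < R.card := by
  obtain ⟨f, -, hdeg⟩ := hG.exists_injective_le_deg_sdiff hH hp0 hn
  have hn' : (3 : ℝ) ≤ n := by exact_mod_cast hn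
  have hmindeg : ∀ x ∈ R, ε / 2 * (p * n) ≤ deg (G \ H) x := fun x _ => by
    have hmin : -1 ≤ min (f x : ℝ) (n / 2 - 2) :=
      le_min (by linarith [(f x).cast_nonneg (α := ℝ)]) (by linarith)
    nlinarith [hdeg x]
  have hlt := Resilience.lt_card_of_neighbors_subset sdiff_le hRW hcard hW hmindeg fun hWn => by
    push_cast
    linarith [hG.sparse W (hR.mono hRW) hWn]
  have hWR : (W.card : ℝ) ≤ 3 * R.card := by exact_mod_cast hcard
  linarith

lemma le_card_of_neighbors_succ (hG : IsTypical n p ε G) (hH : PosaFamily n p ε H)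
    (hp0 : 0 ≤ p) (hn : 3 ≤ n) (hε0 : 0 < ε) (hεn : 8 ≤ ε * n)
    {q : Fin n → List (Fin n)} (hq : q ∈ pathSystems (Fin n)) {R : Finset (Fin n)}
    (hRn : ε / 72 * n < R.card)
    (hR : ∀ x ∈ R, ∀ y, (G \ H).Adj x y → y ∈ R.image (succOn (q x))) :
    (1 / 2 + ε / 4) * n ≤ R.card := by
  obtain ⟨f, hf, hdeg⟩ := hG.exists_injective_le_deg_sdiff hH hp0 hn
  -- all but the first `k` vertices of the ordering have large degree, and `R` has many of these
  set k := ⌊R.card - ε / 72 * n⌋₊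
  set X := R.filter fun x => k ≤ f x
  have hk : k ≤ R.card - ε / 72 * n := Nat.floor_le (by linarith)
  have hX : ε / 72 * n ≤ X.card := by
    have hRX : (R.card : ℝ) ≤ k + X.card := by exact_mod_cast card_le_add_card_filter_le hf R k
    linarith
  have hsum : X.card * (min (k : ℝ) (n / 2 - 2) * p + 7 * ε / 8 * (p * n))
      ≤ adjCount G (succPairs q X R) :=
    calc _ ≤ ∑ x ∈ X, (deg (G \ H) x : ℝ) := by
          rw [← nsmul_eq_mul]
          refine Finset.card_nsmul_le_sum _ _ _ fun x hx => le_trans ?_ (hdeg x)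
          gcongr
          exact (Finset.mem_filter.1 hx).2
      _ ≤ _ := by
          exact_mod_cast sum_deg_le_adjCount sdiff_le fun x hx y hxy => mk_mem_succPairs.2
            ⟨hx, hR x (Finset.mem_filter.1 hx).1 y hxy, hxy.ne⟩
  have hlt : min (k : ℝ) (n / 2 - 2) + 3 * ε / 4 * n < R.card := by
    refine lt_of_mul_lt_mul_left (a := p * X.card) ?_ (by positivity)
    have herr : ε ^ 2 / 576 * (p * n ^ 2) ≤ ε / 8 * (p * n) * X.card := by
      calc ε ^ 2 / 576 * (p * n ^ 2) = ε / 8 * (p * n) * (ε / 72 * n) := by ring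
        _ ≤ _ := by gcongr
    linarith [hG.rotations q hq X R]
  have hk' := Nat.lt_floor_add_one (R.card - ε / 72 * n)
  rcases min_lt_iff.1 (lt_sub_iff_add_lt.2 hlt) with h | h <;> linarith

lemma connected_sdiff (hG : IsTypical n p ε G) (hH : PosaFamily n p ε H) (hp0 : 0 ≤ p)
    (hn : 3 ≤ n) (hε0 : 0 < ε) (hεn : 8 ≤ ε * n) : (G \ H).Connected := by
  have : Nonempty (Fin n) := ⟨⟨0, by omega⟩⟩
  refine connected_of_forall_card_lt fun R hR hclosed => ?_
  have hRn : ε / 72 * n < R.card :=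
    hG.lt_card_of_neighbors_subset hH hp0 hn hεn hR subset_rfl (by omega) hclosed
  have hsucc : ∀ x ∈ R, ∀ y, (G \ H).Adj x y → y ∈ R.image (succOn []) := by
    simpa [succOn] using hclosed
  have hR' := hG.le_card_of_neighbors_succ hH hp0 hn hε0 hεn
    (const_mem_pathSystems List.nodup_nil) hRn hsucc
  rw [Fintype.card_fin]
  exact_mod_cast (by linarith : (n : ℝ) < 2 * R.card)

lemma exists_endpoints (hG : IsTypical n p ε G) (hH : PosaFamily n p ε H) (hp0 : 0 ≤ p)
    (hn : 3 ≤ n) (hε0 : 0 < ε) (hεn : 8 ≤ ε * n) {P : List (Fin n)}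
    (hP : IsLongestPathOn (G \ H ⊔ listGraph P) P) :
    ∃ R : Finset (Fin n), (1 / 2 + ε / 4) * n ≤ R.card ∧ ∀ x ∈ R, ∃ Q : List (Fin n),
      IsPathOn (G \ H ⊔ listGraph P) Q ∧ Q.head? = some x ∧ Q.getLast? = P.getLast? ∧
        Q.Perm P := by
  obtain ⟨R, q, hs, hR, hq, hclosed⟩ :=
    exists_isRotationSystem_closed hP (const_mem_constSystems hP.1.2.1)
  have hRn : ε / 72 * n < R.card :=
    hG.lt_card_of_neighbors_subset hH hp0 hn hεn hR (subset_pathHull P R) (card_pathHull_le P R)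
      fun x hx y hxy => (hclosed x hx y hxy).2
  exact ⟨R, hG.le_card_of_neighbors_succ hH hp0 hn hε0 hεn hq hRn
      fun x hx y hxy => (hclosed x hx y hxy).1,
    fun x hx => ⟨q x, hs.isPathOn_sup hx, hs.head x hx, hs.last x hx, hs.perm x hx⟩⟩

end IsTypical

/-- Rotating a longest path `P` at its first vertex and then, for each resulting path, at its other
end turns the one-sided endpoint property into the two-sided one. -/
lemma RE_of_exists_endpoints {K : SimpleGraph (Fin n)} (hK : K.Connected)
    (h : ∀ P, IsLongestPathOn (K ⊔ listGraph P) P →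
      ∃ R : Finset (Fin n), δ * n ≤ R.card ∧ ∀ x ∈ R, ∃ Q : List (Fin n),
        IsPathOn (K ⊔ listGraph P) Q ∧ Q.head? = some x ∧ Q.getLast? = P.getLast? ∧ Q.Perm P) :
    RE n δ K := by
  refine ⟨hK, fun P hne hP => or_iff_not_imp_left.2 fun hlong => ?_⟩
  push Not at hlong
  have hpath : IsPathOn (K ⊔ listGraph P) P :=
    ⟨hne, hP, (isChain_listGraph hP).imp fun _ _ hab => Or.inr hab⟩
  obtain ⟨R, hR, hRpath⟩ := h P ⟨hpath, hlong⟩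
  have hsecond : ∀ x ∈ R, ∃ S : Finset (Fin n), δ * n ≤ S.card ∧ ∀ y ∈ S, ∃ Q : List (Fin n),
      IsPathOn (K ⊔ listGraph P) Q ∧ Q.head? = some x ∧ Q.getLast? = some y ∧
        Q.toFinset = P.toFinset := by
    intro x hx
    obtain ⟨L, hL, hhead, -, hperm⟩ := hRpath x hx
    have hle : K ⊔ listGraph L.reverse ≤ K ⊔ listGraph P :=
      sup_le le_sup_left (listGraph_le hL.reverse.isChain)
    have hLpath : IsPathOn (K ⊔ listGraph L.reverse) L.reverse :=
      ⟨hL.reverse.1, hL.reverse.2.1,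
        (isChain_listGraph hL.reverse.2.1).imp fun _ _ hab => Or.inr hab⟩
    obtain ⟨S, hS, hSpath⟩ := h L.reverse ⟨hLpath, fun Q hQ => by
      simpa [hperm.length_eq] using hlong Q (hQ.mono hle)⟩
    refine ⟨S, hS, fun y hy => ?_⟩
    obtain ⟨Q, hQ, hQhead, hQlast, hQperm⟩ := hSpath y hy
    refine ⟨Q.reverse, (hQ.mono hle).reverse, by simp [hQlast, hhead], by simp [hQhead], ?_⟩
    exact List.toFinset_eq_of_perm _ _ <|
      (Q.reverse_perm.trans hQperm).trans (L.reverse_perm.trans hperm)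
  choose! S hS hSpath using hsecond
  exact ⟨R, by simpa, fun x => S x, by simpa, hSpath⟩

lemma IsTypical.RE_sdiff (hG : IsTypical n p ε G) (hH : PosaFamily n p ε H) (hp0 : 0 ≤ p)
    (hn : 3 ≤ n) (hε0 : 0 < ε) (hεn : 8 ≤ ε * n) : RE n (1 / 2 + ε / 4) (G \ H) :=
  RE_of_exists_endpoints (hG.connected_sdiff hH hp0 hn hε0 hεn) fun _ hP =>
    hG.exists_endpoints hH hp0 hn hε0 hεn hP

end Deterministic

theorem resilient_RE_general (ε : ℝ) (hε : 0 < ε) (hε1 : ε < 1) :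
    ∃ C : ℝ, 0 < C ∧ ∀ η : ℝ, 0 < η → ∃ N : ℕ, ∀ n : ℕ, N ≤ n →
      ∀ p : ℝ, C * Real.log n / n ≤ p → p ≤ 1 →
        1 - η ≤ Pr n p (fun G =>
          ∀ H : SimpleGraph (Fin n), PosaFamily n p ε H → RE n (1 / 2 + ε / 4) (G \ H)) := by
  refine ⟨10 ^ 8 / ε ^ 4, by positivity, fun η hη =>
    ⟨max 3 (max ⌈8 / ε⌉₊ ⌈3 / η⌉₊), fun n hn p hp hp1 => ?_⟩⟩
  simp only [max_le_iff, Nat.ceil_le] at hn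
  obtain ⟨hn3, hnε, hnη⟩ := hn
  have hn0 : (0 : ℝ) < n := by exact_mod_cast (by omega : 0 < n)
  have hlog : 0 ≤ log n := Real.log_natCast_nonneg n
  have hp0 : 0 ≤ p := le_trans (by positivity) hp
  have hpn : 10 ^ 8 * log n ≤ ε ^ 4 * (p * n) := by
    rwa [div_le_iff₀ hn0, div_mul_eq_mul_div, div_le_iff₀' (by positivity)] at hp
  have hεn : 8 ≤ ε * n := (div_le_iff₀' hε).1 hnε
  calc 1 - η ≤ 1 - 3 / n := sub_le_sub_left ((div_le_comm₀ hη hn0).1 hnη) 1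
    _ ≤ Pr n p (IsTypical n p ε) := one_sub_three_div_le_Pr_isTypical hp0 hp1 hε hε1 hn3 hpn
    _ ≤ _ := Pr_mono hp0 hp1 fun G hG H hH => hG.RE_sdiff hH hp0 hn3 hε hεn

/-- Lemma 4.5.  For every `0 < ε < 1` there exists `C > 0` such
that, for `p ≥ C log n / n`, a.a.s. for every `H ∈ H^ε_{n,p}(G)` the graph `G ∖ H`
satisfies property `RE(1/2 + ε/4)`. -/
theorem resilient_RE (ε : ℝ) (hε : 0 < ε) (hε1 : ε < 1) :
    ∃ C : ℝ, 0 < C ∧ ∀ η : ℝ, 0 < η → ∃ N : ℕ, ∀ n : ℕ, N ≤ n →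
      ∀ p : ℝ, C * Real.log n / n ≤ p → p ≤ 1 →
        1 - η ≤ Pr n p (fun G =>
          ∀ H : SimpleGraph (Fin n), H ≤ G → PosaFamily n p ε H →
            RE n (1/2 + ε/4) (G \ H)) := by
  obtain ⟨C, hC, hlim⟩ := resilient_RE_general ε hε hε1
  exact ⟨C, hC, fun η hη => (hlim η hη).imp fun N hN n hn p hp hp1 => (hN n hn p hp hp1).trans <|
    Pr_mono (le_trans (by positivity) hp) hp1 fun G hG H _ => hG H⟩

end Resilience
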